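/- Let n be an odd positive integer. Then the complex dimension of the χ'-isotypic component of the diagonal coinvariant ring R_W of W(B_n) satisfies dim_ℂ (R_W)^{χ'} ≥ (n+1) + (n-1)(n-3)/4 (note (n−1)(n−3) is divisible by 4 when n is odd). -/

import Mathlib

open MvPolynomial

/-- The action of the signed permutation `(ε, σ) ∈ W(Bₙ)` on the polynomial ring
`ℂ[x₁,…,xₙ,y₁,…,yₙ]`, sending `xᵢ ↦ εᵢ x_{σ(i)}` and `yᵢ ↦ εᵢ y_{σ(i)}`. -/
noncomputable def bAct (n : ℕ) (ε : Fin n → ℤˣ) (σ : Equiv.Perm (Fin n)) :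
    MvPolynomial (Fin n ⊕ Fin n) ℂ →ₐ[ℂ] MvPolynomial (Fin n ⊕ Fin n) ℂ :=
  aeval (Sum.elim
    (fun i => (((ε i : ℤ) : ℂ)) • X (Sum.inl (σ i)))
    (fun i => (((ε i : ℤ) : ℂ)) • X (Sum.inr (σ i))))

/-- The ideal `I_W` generated by the `W(Bₙ)`-invariant polynomials of positive degree
(equivalently, by the invariant polynomials with zero constant term). -/
noncomputable def diagIdeal (n : ℕ) : Ideal (MvPolynomial (Fin n ⊕ Fin n) ℂ) :=
  Ideal.span {f | (∀ ε σ, bAct n ε σ f = f) ∧ constantCoeff f = 0}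

/-- The χ′-isotypic component of the diagonal coinvariant ring `R_W = R/I_W`, where
`χ'(ε,σ) = ∏ᵢ εᵢ` (trivial on permutations, `−1` on each sign change): it is the image
in `R/I_W` of those polynomials `g` with `(ε,σ)·g − χ'(ε,σ)·g ∈ I_W` for all
`(ε,σ) ∈ W(Bₙ)`. -/
noncomputable def chiIsotypic (n : ℕ) :
    Submodule ℂ (MvPolynomial (Fin n ⊕ Fin n) ℂ ⧸ diagIdeal n) :=
  (⨅ (ε : Fin n → ℤˣ) (σ : Equiv.Perm (Fin n)),
    Submodule.comap
      ((bAct n ε σ).toLinearMap - (((∏ i, ε i : ℤˣ) : ℤ) : ℂ) • LinearMap.id)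
      (Submodule.restrictScalars ℂ (diagIdeal n))).map
    (Ideal.Quotient.mkₐ ℂ (diagIdeal n)).toLinearMap

/-!
A polynomial `P` in variables `z_m`, `m ∈ ℕ × ℕ`, defines a linear functional on `ℂ[x, y]` sending
`∏ᵢ xᵢ^aᵢ yᵢ^bᵢ` to the constant coefficient of `(∏ᵢ ∂_{z_{aᵢ bᵢ}}) P`. Multiplication by the
polarized power sum `∑ᵢ xᵢ^p yᵢ^q` is adjoint to the derivation `z_m ↦ z_{m - (p, q)}`. Since `I_W`
is contained in the ideal of the power sums of positive even degree, every `P` killed by the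
derivations with `p + q` even and positive gives a functional on `R_W`. If moreover `P` is
homogeneous of degree `n` and involves only the `z_m` with `m.1 + m.2` odd, it is detected by its
values on the χ'-isotypic component.

Such `P` are the invariants of an odd power series `Z(u, v) = ∑ z_m u^m.1 v^m.2` under
multiplication by even power series with constant term `1`. Let `F_d` be the degree `d` component
of `Z` evaluated at the zero `ρ = (z₀₁, -z₁₀)` of its linear component. Then `z₁₀`, `z₀₁`, `F₃` and
`G_m = ρ^m F₅ + F₃ ∂F₃/∂z_m` for `m = (1, 0), (0, 1)` are invariant, and
`z₁₀ G₁₀ + z₀₁ G₀₁ = 3 F₃²`. The bound comes from counting the products of degree `n` that are at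
most linear in `G₁₀`, `G₀₁` and not divisible by `z₁₀ G₁₀`. They are linearly independent because
`∂/∂z₅₀` maps those involving `G₁₀` or `G₀₁`, up to sign, to distinct products of `z₁₀`, `z₀₁`
and `F₃`.
-/

section IteratedPDeriv

variable {σ R : Type*} [CommRing R]

lemma pderiv_comm (i j : σ) (P : MvPolynomial σ R) :
    pderiv i (pderiv j P) = pderiv j (pderiv i P) := by
  classical
  have h : ⁅(pderiv i : Derivation R (MvPolynomial σ R) (MvPolynomial σ R)),
      (pderiv j : Derivation R (MvPolynomial σ R) (MvPolynomial σ R))⁆ = 0 := by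
    refine derivation_ext fun k => ?_
    simp only [Derivation.commutator_apply, pderiv_X, Pi.single_apply, apply_ite (pderiv _),
      map_zero, pderiv_one, ite_self, sub_zero, Derivation.zero_apply]
  simpa [Derivation.commutator_apply, sub_eq_zero] using DFunLike.congr_fun h P

instance : LeftCommutative fun (m : σ) (A : MvPolynomial σ R →ₗ[R] MvPolynomial σ R) =>
    A ∘ₗ (pderiv m).toLinearMap where
  left_comm i j A := LinearMap.ext fun P => congrArg A (pderiv_comm j i P)

/-- The composite of the partial derivatives `∂ₘ` for `m` in the multiset `s`. -/
noncomputable def iteratedPDeriv (s : Multiset σ) : MvPolynomial σ R →ₗ[R] MvPolynomial σ R :=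
  s.foldr (fun m A => A ∘ₗ (pderiv m).toLinearMap) LinearMap.id

lemma iteratedPDeriv_zero (P : MvPolynomial σ R) : iteratedPDeriv 0 P = P := rfl

lemma iteratedPDeriv_cons (m : σ) (s : Multiset σ) (P : MvPolynomial σ R) :
    iteratedPDeriv (m ::ₘ s) P = iteratedPDeriv s (pderiv m P) := by
  rw [iteratedPDeriv, Multiset.foldr_cons]
  rfl

lemma pderiv_mem_supported {S : Set σ} {P : MvPolynomial σ R} (hP : P ∈ supported R S) (m : σ) :
    pderiv m P ∈ supported R S := by
  classical
  rw [supported] at hP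
  induction hP using Algebra.adjoin_induction with
  | mem x hx =>
    obtain ⟨k, -, rfl⟩ := hx
    rw [pderiv_X, Pi.single_apply]
    split_ifs
    exacts [one_mem _, zero_mem _]
  | algebraMap r => simp [algebraMap_eq]
  | add x y _ _ hx hy => rw [map_add]; exact add_mem hx hy
  | mul x y hx' hy' hx hy =>
    rw [pderiv_mul]
    exact add_mem (mul_mem hx hy') (mul_mem hx' hy)

lemma eq_zero_of_forall_pderiv_eq_zero [IsDomain R] [CharZero R] {P : MvPolynomial σ R}
    (h0 : constantCoeff P = 0) (h : ∀ m, pderiv m P = 0) : P = 0 := by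
  classical
  ext μ
  rw [coeff_zero]
  obtain rfl | ⟨m, hm⟩ := μ.support.eq_empty_or_nonempty.imp_left Finsupp.support_eq_empty.1
  · exact h0
  · have hμ : μ - Finsupp.single m 1 + Finsupp.single m 1 = μ := by
      refine tsub_add_cancel_of_le (Finsupp.single_le_iff.2 ?_)
      exact Nat.one_le_iff_ne_zero.2 (Finsupp.mem_support_iff.1 hm)
    have hcoeff := congrArg (coeff (μ - Finsupp.single m 1)) (h m)
    rw [coeff_pderiv, hμ, coeff_zero] at hcoeff
    exact (mul_eq_zero.1 hcoeff).resolve_right (Nat.cast_add_one_ne_zero _)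

lemma eq_zero_of_constantCoeff_iteratedPDeriv_eq_zero [IsDomain R] [CharZero R] {S : Set σ}
    {n : ℕ} {P : MvPolynomial σ R} (hhom : P.IsHomogeneous n) (hS : P ∈ supported R S)
    (h : ∀ s : Multiset σ, s.card = n → (∀ m ∈ s, m ∈ S) →
      constantCoeff (iteratedPDeriv s P) = 0) : P = 0 := by
  induction n generalizing P with
  | zero =>
    rw [(totalDegree_eq_zero_iff_eq_C).1 (Nat.le_zero.1 hhom.totalDegree_le)]
    exact (congrArg C (h 0 rfl (by simp))).trans C_0
  | succ n ih =>
    have hconst : constantCoeff P = 0 := hhom.coeff_eq_zero (by simp)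
    refine eq_zero_of_forall_pderiv_eq_zero hconst fun m => ?_
    by_cases hm : m ∈ S
    · refine ih hhom.pderiv (pderiv_mem_supported hS m) fun s hs hsS => ?_
      rw [← iteratedPDeriv_cons]
      exact h _ (by simp [hs]) (by simpa [hm] using hsS)
    · exact pderiv_eq_zero_of_notMem_vars fun hmem => hm (mem_supported.1 hS hmem)

end IteratedPDeriv

section Lowering

variable {M R : Type*} [PartialOrder M] [Sub M] [DecidableLE M] [CommRing R]

/-- The derivation `z_m ↦ z_{m - a}` (and `z_m ↦ 0` unless `a ≤ m`). It is the infinitesimal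
multiplication of the generating series `∑ z_m tᵐ` by `1 + ε tᵃ`, and it is adjoint to
multiplication by a power sum (`polarPairing_powerSum_mul`). -/
noncomputable def lowering (a : M) : Derivation R (MvPolynomial M R) (MvPolynomial M R) :=
  mkDerivation R fun m => if a ≤ m then X (m - a) else 0

lemma lowering_X (a m : M) :
    lowering a (X m : MvPolynomial M R) = if a ≤ m then X (m - a) else 0 :=
  mkDerivation_X _ _ _

lemma lowering_X_of_not_le {a m : M} (h : ¬ a ≤ m) :
    lowering a (X m : MvPolynomial M R) = 0 := by
  rw [lowering_X, if_neg h]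

lemma constantCoeff_lowering (a : M) (P : MvPolynomial M R) :
    constantCoeff (lowering a P) = 0 := by
  induction P using MvPolynomial.induction_on with
  | C c => rw [derivation_C, map_zero]
  | add P Q hP hQ => rw [map_add, map_add, hP, hQ, add_zero]
  | mul_X P m hP =>
    have hX : constantCoeff (lowering a (X m : MvPolynomial M R)) = 0 := by
      rw [lowering_X]
      split_ifs <;> simp
    simp [Derivation.leibniz, hP, hX]

variable [AddCommMonoid M] [CanonicallyOrderedAdd M] [OrderedSub M] [AddLeftReflectLE M]

lemma lowering_X_add (a m : M) : lowering a (X (m + a) : MvPolynomial M R) = X m := by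
  rw [lowering_X, if_pos le_add_self, add_tsub_cancel_right]

lemma pderiv_lowering (a m : M) (P : MvPolynomial M R) :
    pderiv m (lowering a P) = lowering a (pderiv m P) + pderiv (m + a) P := by
  classical
  have h : ⁅(pderiv m : Derivation R (MvPolynomial M R) (MvPolynomial M R)),
      (lowering a : Derivation R (MvPolynomial M R) (MvPolynomial M R))⁆ = pderiv (m + a) := by
    refine derivation_ext fun k => ?_
    have hconst : lowering a (pderiv m (X k : MvPolynomial M R)) = 0 := by
      rw [pderiv_X, Pi.single_apply]
      split_ifs <;> simp
    rw [Derivation.commutator_apply, hconst, sub_zero]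
    by_cases hk : a ≤ k
    · rw [lowering_X, if_pos hk, pderiv_X, pderiv_X, Pi.single_apply, Pi.single_apply]
      exact if_congr (tsub_eq_iff_eq_add_of_le hk) rfl rfl
    · have hne : k ≠ m + a := fun h => hk (h ▸ le_add_self)
      rw [lowering_X_of_not_le hk, map_zero, pderiv_X_of_ne hne]
  rw [← sub_eq_iff_eq_add', ← h, Derivation.commutator_apply]

lemma iteratedPDeriv_lowering {ι : Type*} [DecidableEq ι] (s : Finset ι) (m : ι → M) (a : M)
    (P : MvPolynomial M R) :
    iteratedPDeriv (s.val.map m) (lowering a P) =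
      lowering a (iteratedPDeriv (s.val.map m) P) +
        ∑ i ∈ s, iteratedPDeriv (s.val.map (Function.update m i (m i + a))) P := by
  induction s using Finset.induction_on generalizing P with
  | empty => simp [iteratedPDeriv_zero]
  | insert j s hj ih =>
    have hself : s.val.map (Function.update m j (m j + a)) = s.val.map m :=
      Multiset.map_congr rfl fun i hi =>
        Function.update_of_ne (ne_of_mem_of_not_mem (Finset.mem_def.2 hi) hj) _ _
    have hother : ∀ i ∈ s, iteratedPDeriv
        ((insert j s).val.map (Function.update m i (m i + a))) P =
          iteratedPDeriv (s.val.map (Function.update m i (m i + a))) (pderiv (m j) P) := by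
      intro i hi
      rw [Finset.insert_val_of_notMem hj, Multiset.map_cons, iteratedPDeriv_cons,
        Function.update_of_ne (ne_of_mem_of_not_mem hi hj).symm]
    rw [Finset.sum_insert hj, Finset.sum_congr rfl hother, Finset.insert_val_of_notMem hj]
    simp only [Multiset.map_cons, iteratedPDeriv_cons, Function.update_self, hself,
      pderiv_lowering, map_add, ih]
    ring

end Lowering

section OddInvariants

open Finset.HasAntidiagonal (antidiagonal mem_antidiagonal)

variable {R : Type*} [CommRing R]

/-- The subalgebra of polynomials in the variables `z_m` with `m.1 + m.2` odd which are
infinitesimally invariant under multiplication of the odd power series `∑ z_m u^m.1 v^m.2` by even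
power series with constant term `1`. -/
noncomputable def oddInvariants (R : Type*) [CommRing R] :
    Subalgebra R (MvPolynomial (ℕ × ℕ) R) where
  carrier := {P | P ∈ supported R {m : ℕ × ℕ | Odd (m.1 + m.2)} ∧
    ∀ a : ℕ × ℕ, Even (a.1 + a.2) → a ≠ 0 → lowering a P = 0}
  algebraMap_mem' r := ⟨Subalgebra.algebraMap_mem _ r, fun _ _ _ => Derivation.map_algebraMap _ r⟩
  add_mem' hP hQ := ⟨add_mem hP.1 hQ.1, fun a ha ha0 => by
    rw [map_add, hP.2 a ha ha0, hQ.2 a ha ha0, add_zero]⟩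
  mul_mem' hP hQ := ⟨mul_mem hP.1 hQ.1, fun a ha ha0 => by
    rw [Derivation.leibniz, hP.2 a ha ha0, hQ.2 a ha ha0, smul_zero, smul_zero, add_zero]⟩

lemma two_le_of_even_of_ne_zero {a : ℕ × ℕ} (ha : Even (a.1 + a.2)) (ha0 : a ≠ 0) :
    2 ≤ a.1 + a.2 := by
  have hpos : a.1 + a.2 ≠ 0 := fun h =>
    ha0 (Prod.ext (Nat.add_eq_zero_iff.1 h).1 (Nat.add_eq_zero_iff.1 h).2)
  obtain ⟨k, hk⟩ := ha
  lia

lemma lowering_X_of_lt {a m : ℕ × ℕ} (h : m.1 + m.2 < a.1 + a.2) :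
    lowering a (X m : MvPolynomial (ℕ × ℕ) R) = 0 :=
  lowering_X_of_not_le fun hle => (add_le_add hle.1 hle.2).not_gt h

lemma X_mem_oddInvariants {m : ℕ × ℕ} (hm : m.1 + m.2 = 1) : X m ∈ oddInvariants R :=
  ⟨Algebra.subset_adjoin ⟨m, Nat.odd_iff.2 (by rw [hm]), rfl⟩, fun _ ha ha0 =>
    lowering_X_of_lt (hm.trans_lt (two_le_of_even_of_ne_zero ha ha0))⟩

/-- The monomial `u^m.1 v^m.2` evaluated at the zero `(z₀₁, -z₁₀)` of the linear form
`z₁₀ u + z₀₁ v`. -/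
noncomputable def rootMonomial (m : ℕ × ℕ) : MvPolynomial (ℕ × ℕ) R :=
  X (0, 1) ^ m.1 * (-X (1, 0)) ^ m.2

lemma rootMonomial_add (m a : ℕ × ℕ) :
    (rootMonomial (m + a) : MvPolynomial (ℕ × ℕ) R) = rootMonomial m * rootMonomial a := by
  simp only [rootMonomial, Prod.fst_add, Prod.snd_add, pow_add]
  ring

lemma rootMonomial_mem_oddInvariants (m : ℕ × ℕ) : rootMonomial m ∈ oddInvariants R :=
  mul_mem (pow_mem (X_mem_oddInvariants rfl) _) (pow_mem (neg_mem (X_mem_oddInvariants rfl)) _)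

lemma isHomogeneous_rootMonomial (m : ℕ × ℕ) :
    (rootMonomial m : MvPolynomial (ℕ × ℕ) R).IsHomogeneous (m.1 + m.2) := by
  simpa [rootMonomial] using
    ((isHomogeneous_X R ((0 : ℕ), 1)).pow m.1).mul ((isHomogeneous_X R ((1 : ℕ), 0)).neg.pow m.2)

lemma pderiv_rootMonomial {a : ℕ × ℕ} (ha : 2 ≤ a.1 + a.2) (m : ℕ × ℕ) :
    pderiv a (rootMonomial m : MvPolynomial (ℕ × ℕ) R) = 0 := by
  have h10 : a ≠ (1, 0) := by rintro rfl; simp at ha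
  have h01 : a ≠ (0, 1) := by rintro rfl; simp at ha
  simp [rootMonomial, pderiv_X_of_ne h10.symm, pderiv_X_of_ne h01.symm]

/-- The homogeneous component of degree `d` of the power series `∑ z_m u^m.1 v^m.2`, evaluated at
the zero `(z₀₁, -z₁₀)` of its linear component. -/
noncomputable def formAtRoot (d : ℕ) : MvPolynomial (ℕ × ℕ) R :=
  ∑ m ∈ antidiagonal d, X m * rootMonomial m

lemma formAtRoot_one : (formAtRoot 1 : MvPolynomial (ℕ × ℕ) R) = 0 := by
  have hpair : antidiagonal 1 = {((0 : ℕ), (1 : ℕ)), (1, 0)} := rfl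
  rw [formAtRoot, hpair, Finset.sum_pair (by decide), rootMonomial, rootMonomial]
  ring

lemma isHomogeneous_formAtRoot (d : ℕ) :
    (formAtRoot d : MvPolynomial (ℕ × ℕ) R).IsHomogeneous (d + 1) := by
  refine IsHomogeneous.sum _ _ _ fun m hm => ?_
  rw [← mem_antidiagonal.1 hm, add_comm _ 1]
  exact (isHomogeneous_X R m).mul (isHomogeneous_rootMonomial m)

lemma formAtRoot_mem_supported {d : ℕ} (hd : Odd d) :
    formAtRoot d ∈ supported R {m : ℕ × ℕ | Odd (m.1 + m.2)} := by
  refine sum_mem fun m hm =>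
    mul_mem (Algebra.subset_adjoin ⟨m, ?_, rfl⟩) (rootMonomial_mem_oddInvariants m).1
  rwa [Set.mem_ofPred_eq, mem_antidiagonal.1 hm]

lemma pderiv_formAtRoot {m : ℕ × ℕ} (hm : 2 ≤ m.1 + m.2) (d : ℕ) :
    pderiv m (formAtRoot d : MvPolynomial (ℕ × ℕ) R) =
      if m.1 + m.2 = d then rootMonomial m else 0 := by
  simp only [formAtRoot, map_sum, pderiv_mul, pderiv_rootMonomial hm, mul_zero, add_zero, pderiv_X,
    Pi.single_apply, ite_mul, one_mul, zero_mul, Finset.sum_ite_eq', mem_antidiagonal]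

lemma lowering_formAtRoot {a : ℕ × ℕ} (ha : Even (a.1 + a.2)) (ha0 : a ≠ 0) (d : ℕ) :
    lowering a (formAtRoot d : MvPolynomial (ℕ × ℕ) R) =
      ∑ m ∈ antidiagonal d, rootMonomial m * lowering a (X m) := by
  simp only [formAtRoot, map_sum, Derivation.leibniz,
    (rootMonomial_mem_oddInvariants _).2 a ha ha0, smul_eq_mul, mul_zero, zero_add]

lemma lowering_formAtRoot_of_lt {a : ℕ × ℕ} (ha : Even (a.1 + a.2)) (ha0 : a ≠ 0) {d : ℕ}
    (hd : d < a.1 + a.2) : lowering a (formAtRoot d : MvPolynomial (ℕ × ℕ) R) = 0 := by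
  rw [lowering_formAtRoot ha ha0]
  refine Finset.sum_eq_zero fun m hm => ?_
  rw [lowering_X_of_lt ((mem_antidiagonal.1 hm).trans_lt hd), mul_zero]

lemma lowering_formAtRoot_add {a : ℕ × ℕ} (ha : Even (a.1 + a.2)) (ha0 : a ≠ 0) (d : ℕ) :
    lowering a (formAtRoot (d + (a.1 + a.2)) : MvPolynomial (ℕ × ℕ) R) =
      rootMonomial a * formAtRoot d := by
  rw [lowering_formAtRoot ha ha0, formAtRoot, Finset.mul_sum]
  symm
  refine Finset.sum_of_injOn (· + a) (add_left_injective a).injOn ?_ ?_ ?_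
  · intro m hm
    simp only [Prod.fst_add, Prod.snd_add,
      Finset.mem_coe, mem_antidiagonal] at hm ⊢
    lia
  · intro k hk hkimage
    have hak : ¬ a ≤ k := by
      refine fun hle => hkimage ⟨k - a, ?_, tsub_add_cancel_of_le hle⟩
      have h1 := hle.1
      have h2 := hle.2
      simp only [mem_antidiagonal, Finset.mem_coe, Prod.fst_sub, Prod.snd_sub] at hk ⊢
      lia
    rw [lowering_X_of_not_le hak, mul_zero]
  · intro m _
    rw [lowering_X_add, rootMonomial_add]
    ring

lemma cubicForm_mem_oddInvariants : formAtRoot 3 ∈ oddInvariants R := by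
  refine ⟨formAtRoot_mem_supported (by decide), fun a ha ha0 => ?_⟩
  obtain h3 | h3 := lt_or_ge 3 (a.1 + a.2)
  · exact lowering_formAtRoot_of_lt ha ha0 h3
  · have h2 : 2 = a.1 + a.2 := by
      have := two_le_of_even_of_ne_zero ha ha0
      obtain ⟨k, hk⟩ := ha
      lia
    have h := lowering_formAtRoot_add (R := R) ha ha0 1
    rwa [← h2, formAtRoot_one, mul_zero] at h

lemma lowering_pderiv_cubicForm {a m : ℕ × ℕ} (ha : Even (a.1 + a.2)) (ha0 : a ≠ 0)
    (hm : m.1 + m.2 = 1) :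
    lowering a (pderiv m (formAtRoot 3 : MvPolynomial (ℕ × ℕ) R)) =
      -if a.1 + a.2 = 2 then rootMonomial (m + a) else 0 := by
  have ha2 := two_le_of_even_of_ne_zero ha ha0
  have hdeg : (m + a).1 + (m + a).2 = a.1 + a.2 + 1 := by
    rw [Prod.fst_add, Prod.snd_add]; lia
  have h := pderiv_lowering a m (formAtRoot 3 : MvPolynomial (ℕ × ℕ) R)
  rw [cubicForm_mem_oddInvariants.2 a ha ha0, map_zero, pderiv_formAtRoot (m := m + a) (by lia),
    hdeg] at h
  simpa only [Nat.add_eq_right, Nat.reduceEqDiff] using eq_neg_of_add_eq_zero_left h.symm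

lemma lowering_quinticForm {a : ℕ × ℕ} (ha : Even (a.1 + a.2)) (ha0 : a ≠ 0) :
    lowering a (formAtRoot 5 : MvPolynomial (ℕ × ℕ) R) =
      if a.1 + a.2 = 2 then rootMonomial a * formAtRoot 3 else 0 := by
  split_ifs with h2
  · simpa only [h2] using lowering_formAtRoot_add (R := R) ha ha0 3
  obtain h5 | h5 := lt_or_ge 5 (a.1 + a.2)
  · exact lowering_formAtRoot_of_lt ha ha0 h5
  · have h4 : a.1 + a.2 = 4 := by
      have := two_le_of_even_of_ne_zero ha ha0
      obtain ⟨k, hk⟩ := ha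
      lia
    simpa only [h4, formAtRoot_one, mul_zero] using lowering_formAtRoot_add (R := R) ha ha0 1

/-- The correction of the degree `5` form at the root to an invariant: under a lowering operator
of degree `2` the variations of the two summands cancel. Meant for `m.1 + m.2 = 1`. -/
noncomputable def quinticInvariant (m : ℕ × ℕ) : MvPolynomial (ℕ × ℕ) R :=
  rootMonomial m * formAtRoot 5 + formAtRoot 3 * pderiv m (formAtRoot 3)

lemma quinticInvariant_mem_oddInvariants {m : ℕ × ℕ} (hm : m.1 + m.2 = 1) :
    quinticInvariant m ∈ oddInvariants R := by
  have hF3 : formAtRoot 3 ∈ supported R _ := cubicForm_mem_oddInvariants.1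
  refine ⟨add_mem (mul_mem (rootMonomial_mem_oddInvariants m).1
    (formAtRoot_mem_supported (by decide))) (mul_mem hF3 (pderiv_mem_supported hF3 m)),
    fun a ha ha0 => ?_⟩
  simp only [quinticInvariant, map_add, Derivation.leibniz, smul_eq_mul,
    lowering_quinticForm ha ha0, lowering_pderiv_cubicForm ha ha0 hm, rootMonomial_add,
    cubicForm_mem_oddInvariants.2 a ha ha0, (rootMonomial_mem_oddInvariants m).2 a ha ha0]
  split_ifs <;> ring

lemma isHomogeneous_quinticInvariant {m : ℕ × ℕ} (hm : m.1 + m.2 = 1) :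
    (quinticInvariant m : MvPolynomial (ℕ × ℕ) R).IsHomogeneous 7 :=
  (hm ▸ (isHomogeneous_rootMonomial m).mul (isHomogeneous_formAtRoot 5)).add
    ((isHomogeneous_formAtRoot 3).mul (isHomogeneous_formAtRoot 3).pderiv)

end OddInvariants

section PowerSums

variable {ι R : Type*} [CommRing R]

/-- The monomial `xᵢ^a.1 yᵢ^a.2`. -/
noncomputable def pairMonomial (i : ι) (a : ℕ × ℕ) : MvPolynomial (ι ⊕ ι) R :=
  X (Sum.inl i) ^ a.1 * X (Sum.inr i) ^ a.2

lemma pairMonomial_add (i : ι) (a b : ℕ × ℕ) :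
    (pairMonomial i (a + b) : MvPolynomial (ι ⊕ ι) R) = pairMonomial i a * pairMonomial i b := by
  simp only [pairMonomial, Prod.fst_add, Prod.snd_add, pow_add]
  ring

lemma prod_pairMonomial_update {κ : Type*} [Fintype κ] [DecidableEq κ] (f : κ → ι)
    (m : κ → ℕ × ℕ) (a : ℕ × ℕ) (j : κ) :
    (∏ k, pairMonomial (f k) (Function.update m j (m j + a) k) : MvPolynomial (ι ⊕ ι) R) =
      pairMonomial (f j) a * ∏ k, pairMonomial (f k) (m k) := by
  rw [← Finset.mul_prod_erase _ _ (Finset.mem_univ j), Function.update_self, pairMonomial_add,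
    ← Finset.mul_prod_erase _ (fun k => pairMonomial (f k) (m k)) (Finset.mem_univ j),
    Finset.prod_congr rfl fun k hk => by rw [Function.update_of_ne (Finset.ne_of_mem_erase hk)]]
  ring

variable [Fintype ι]

lemma monomial_eq_smul_prod_pairMonomial (s : ι ⊕ ι →₀ ℕ) (c : R) :
    monomial s c = c • ∏ i, pairMonomial i (s (Sum.inl i), s (Sum.inr i)) := by
  simp only [pairMonomial, Finset.prod_mul_distrib]
  rw [← Fintype.prod_sum_type fun v => (X v : MvPolynomial (ι ⊕ ι) R) ^ s v, monomial_eq,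
    C_mul', Finsupp.prod_fintype _ _ fun _ => pow_zero _]

/-- The polarized power sum `∑ᵢ xᵢ^a.1 yᵢ^a.2`. -/
noncomputable def powerSum (a : ℕ × ℕ) : MvPolynomial (ι ⊕ ι) R := ∑ i, pairMonomial i a

lemma powerSum_mul_prod_pairMonomial [DecidableEq ι] (a : ℕ × ℕ) (m : ι → ℕ × ℕ) :
    (powerSum a * ∏ i, pairMonomial i (m i) : MvPolynomial (ι ⊕ ι) R) =
      ∑ j, ∏ i, pairMonomial i (Function.update m j (m j + a) i) := by
  rw [powerSum, Finset.sum_mul]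
  exact Finset.sum_congr rfl fun j _ => (prod_pairMonomial_update id m a j).symm

/-- The ideal generated by the polarized power sums of positive even degree. -/
noncomputable def evenPowerSumIdeal (ι R : Type*) [CommRing R] [Fintype ι] :
    Ideal (MvPolynomial (ι ⊕ ι) R) :=
  Ideal.span (powerSum '' {a : ℕ × ℕ | Even (a.1 + a.2) ∧ a ≠ 0})

lemma powerSum_mem_evenPowerSumIdeal {a : ℕ × ℕ} (ha : Even (a.1 + a.2)) (ha0 : a ≠ 0) :
    powerSum a ∈ evenPowerSumIdeal ι R :=
  Ideal.subset_span ⟨a, ⟨ha, ha0⟩, rfl⟩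

/-- The sum of the monomials `∏ₖ x_{f k}^(m k).1 y_{f k}^(m k).2` over all injections `f`. -/
noncomputable def injectionSum {κ : Type*} [Fintype κ] (m : κ → ℕ × ℕ) :
    MvPolynomial (ι ⊕ ι) R := by
  classical exact ∑ f : κ ↪ ι, ∏ k, pairMonomial (f k) (m k)

lemma powerSum_mul_injectionSum {r : ℕ} (a : ℕ × ℕ) (b : Fin r → ℕ × ℕ) :
    (powerSum a * injectionSum b : MvPolynomial (ι ⊕ ι) R) =
      injectionSum (Fin.cons a b : Fin (r + 1) → ℕ × ℕ) +
        ∑ j, injectionSum (Function.update b j (b j + a)) := by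
  classical
  have hsplit (f : Fin r ↪ ι) : (powerSum a : MvPolynomial (ι ⊕ ι) R) =
      ∑ j, pairMonomial (f j) a + ∑ i : {i // i ∉ Set.range f}, pairMonomial (i : ι) a := by
    rw [powerSum, ← Fintype.sum_subtype_add_sum_subtype (· ∈ Set.range f)]
    congr 1
    symm
    exact Finset.sum_equiv (Equiv.ofInjective f f.injective) (by simp) fun _ _ => rfl
  have hcons : (injectionSum (Fin.cons a b : Fin (r + 1) → ℕ × ℕ) : MvPolynomial (ι ⊕ ι) R) =
      ∑ f : Fin r ↪ ι, ∑ i : {i // i ∉ Set.range f},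
        pairMonomial (i : ι) a * ∏ k, pairMonomial (f k) (b k) := by
    rw [injectionSum, ← (Equiv.embeddingFinSucc r ι).symm.sum_comp, Fintype.sum_sigma]
    simp only [Equiv.coe_embeddingFinSucc_symm, Fin.prod_univ_succ, Fin.cons_zero, Fin.cons_succ]
  rw [hcons]
  simp only [injectionSum, prod_pairMonomial_update]
  rw [Finset.sum_comm, ← Finset.sum_add_distrib, Finset.mul_sum]
  refine Finset.sum_congr rfl fun f _ => ?_
  rw [← Finset.sum_mul, ← Finset.sum_mul, hsplit f, add_mul, add_comm]

lemma injectionSum_mem_evenPowerSumIdeal {r : ℕ} (m : Fin r → ℕ × ℕ)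
    (hm : ∀ k, Even ((m k).1 + (m k).2)) (hm0 : m ≠ 0) :
    injectionSum m ∈ evenPowerSumIdeal ι R := by
  induction r with
  | zero => exact absurd (Subsingleton.elim m 0) hm0
  | succ r ih =>
    obtain ⟨a, b, rfl⟩ : ∃ a b, m = Fin.cons a b := ⟨m 0, Fin.tail m, (Fin.cons_self_tail m).symm⟩
    have ha : Even (a.1 + a.2) := hm 0
    have hb : ∀ k, Even ((b k).1 + (b k).2) := fun k => hm k.succ
    have hab : a ≠ 0 ∨ b ≠ 0 := by
      by_contra! h
      exact hm0 (funext (Fin.cases h.1 fun k => congrFun h.2 k))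
    rw [← sub_eq_of_eq_add (powerSum_mul_injectionSum a b)]
    refine sub_mem ?_ (sum_mem fun j _ => ih _ (fun k => ?_) fun h => ?_)
    · obtain ha0 | hb0 := hab
      exacts [Ideal.mul_mem_right _ _ (powerSum_mem_evenPowerSumIdeal ha ha0),
        Ideal.mul_mem_left _ _ (ih b hb hb0)]
    · obtain rfl | hkj := eq_or_ne k j
      · rw [Function.update_self, Prod.fst_add, Prod.snd_add, add_add_add_comm]
        exact (hb k).add ha
      · rw [Function.update_of_ne hkj]
        exact hb k
    · have hj : b j + a = 0 := by simpa using congrFun h j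
      refine hab.elim (· (add_eq_zero.1 hj).2) (· (funext fun k => ?_))
      obtain rfl | hkj := eq_or_ne k j
      · exact (add_eq_zero.1 hj).1
      · simpa [hkj] using congrFun h k

end PowerSums

section PolarPairing

variable {ι R : Type*} [CommRing R] [Fintype ι]

/-- The pairing of `R[x, y]` with `R[z]` for which `∏ᵢ xᵢ^aᵢ yᵢ^bᵢ` extracts the constant
coefficient of `(∏ᵢ ∂_{z_{aᵢ bᵢ}}) P`. -/
noncomputable def polarPairing :
    MvPolynomial (ι ⊕ ι) R →ₗ[R] MvPolynomial (ℕ × ℕ) R →ₗ[R] R :=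
  (basisMonomials (ι ⊕ ι) R).constr R fun s =>
    lcoeff R 0 ∘ₗ iteratedPDeriv (Finset.univ.val.map fun i => (s (Sum.inl i), s (Sum.inr i)))

lemma polarPairing_prod_pairMonomial (m : ι → ℕ × ℕ) (P : MvPolynomial (ℕ × ℕ) R) :
    polarPairing (∏ i, pairMonomial i (m i)) P =
      constantCoeff (iteratedPDeriv (Finset.univ.val.map m) P) := by
  have hmonomial := monomial_eq_smul_prod_pairMonomial
    (Finsupp.equivFunOnFinite.symm (Sum.elim (fun i => (m i).1) fun i => (m i).2)) (1 : R)
  simp only [Finsupp.equivFunOnFinite_symm_apply_apply, Sum.elim_inl, Sum.elim_inr, one_smul,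
    Prod.mk.eta] at hmonomial
  rw [← hmonomial, polarPairing, ← congrFun (coe_basisMonomials _ _), Module.Basis.constr_basis]
  rfl

lemma polarPairing_powerSum_mul (a : ℕ × ℕ) (f : MvPolynomial (ι ⊕ ι) R)
    (P : MvPolynomial (ℕ × ℕ) R) :
    polarPairing (powerSum a * f) P = polarPairing f (lowering a P) := by
  classical
  induction f using MvPolynomial.induction_on' with
  | monomial s c =>
    rw [monomial_eq_smul_prod_pairMonomial, mul_smul_comm,
      powerSum_mul_prod_pairMonomial]
    simp only [map_smul, map_sum, LinearMap.sum_apply,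
      LinearMap.smul_apply, polarPairing_prod_pairMonomial, iteratedPDeriv_lowering, map_add,
      constantCoeff_lowering, zero_add]
  | add f g hf hg => simp only [mul_add, map_add, LinearMap.add_apply, hf, hg]

lemma polarPairing_eq_zero_of_mem_evenPowerSumIdeal {f : MvPolynomial (ι ⊕ ι) R}
    (hf : f ∈ evenPowerSumIdeal ι R) {P : MvPolynomial (ℕ × ℕ) R} (hP : P ∈ oddInvariants R) :
    polarPairing f P = 0 := by
  obtain ⟨r, c, g, rfl⟩ := Submodule.mem_span_set'.1 hf
  rw [map_sum, LinearMap.sum_apply]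
  refine Finset.sum_eq_zero fun k _ => ?_
  obtain ⟨a, ⟨ha, ha0⟩, hg⟩ := (g k).2
  rw [← hg, smul_eq_mul, mul_comm, polarPairing_powerSum_mul, hP.2 a ha ha0, map_zero]

end PolarPairing

section SignedPermutations

variable {n : ℕ}

lemma bAct_pairMonomial (ε : Fin n → ℤˣ) (σ : Equiv.Perm (Fin n)) (i : Fin n) (a : ℕ × ℕ) :
    bAct n ε σ (pairMonomial i a) =
      (((ε i : ℤ) : ℂ) ^ (a.1 + a.2)) • pairMonomial (σ i) a := by
  simp only [pairMonomial, map_mul, map_pow, bAct, aeval_X, Sum.elim_inl, Sum.elim_inr, smul_pow,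
    smul_mul_smul_comm, pow_add]

lemma bAct_prod_pairMonomial (ε : Fin n → ℤˣ) (σ τ : Equiv.Perm (Fin n)) (m : Fin n → ℕ × ℕ) :
    bAct n ε σ (∏ i, pairMonomial (τ i) (m i)) =
      (∏ i, ((ε (τ i) : ℤ) : ℂ) ^ ((m i).1 + (m i).2)) • ∏ i, pairMonomial ((σ * τ) i) (m i) := by
  simp only [map_prod, bAct_pairMonomial, Finset.prod_smul, Equiv.Perm.mul_apply]

lemma injectionSum_eq_sum_perm {ι R : Type*} [CommRing R] [Fintype ι] [DecidableEq ι]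
    (m : ι → ℕ × ℕ) : (injectionSum m : MvPolynomial (ι ⊕ ι) R) =
      ∑ σ : Equiv.Perm ι, ∏ i, pairMonomial (σ i) (m i) := by
  classical
  exact Fintype.sum_equiv (Equiv.embeddingEquivOfFinite ι) _ _ fun _ => rfl

lemma sum_units_int_pow_of_odd {d : ℕ} (hd : Odd d) : ∑ e : ℤˣ, ((e : ℤ) : ℂ) ^ d = 0 := by
  rw [UnitsInt.univ, Finset.sum_pair (by decide)]
  simp [hd.neg_one_pow]

lemma sum_bAct_prod_pairMonomial (m : Fin n → ℕ × ℕ) :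
    ∑ ε, ∑ σ, bAct n ε σ (∏ i, pairMonomial i (m i)) =
      (∏ i, ∑ e : ℤˣ, ((e : ℤ) : ℂ) ^ ((m i).1 + (m i).2)) • injectionSum m := by
  have h (ε σ) := bAct_prod_pairMonomial ε σ 1 m
  simp only [Equiv.Perm.one_apply, mul_one] at h
  simp only [h, ← Finset.smul_sum, ← injectionSum_eq_sum_perm, ← Finset.sum_smul,
    Fintype.prod_sum]

lemma sum_bAct_prod_pairMonomial_mem_evenPowerSumIdeal {m : Fin n → ℕ × ℕ} (hm : m ≠ 0) :
    ∑ ε, ∑ σ, bAct n ε σ (∏ i, pairMonomial i (m i)) ∈ evenPowerSumIdeal (Fin n) ℂ := by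
  rw [sum_bAct_prod_pairMonomial]
  by_cases heven : ∀ i, Even ((m i).1 + (m i).2)
  · exact Submodule.smul_of_tower_mem _ _ (injectionSum_mem_evenPowerSumIdeal m heven hm)
  · obtain ⟨i, hi⟩ := not_forall.1 heven
    rw [Finset.prod_eq_zero (Finset.mem_univ i)
      (sum_units_int_pow_of_odd (Nat.not_even_iff_odd.1 hi)), zero_smul]
    exact zero_mem _

lemma sum_bAct_mem_evenPowerSumIdeal {f : MvPolynomial (Fin n ⊕ Fin n) ℂ}
    (hf : constantCoeff f = 0) : ∑ ε, ∑ σ, bAct n ε σ f ∈ evenPowerSumIdeal (Fin n) ℂ := by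
  suffices h : (∑ ε, ∑ σ, (bAct n ε σ).toLinearMap) f ∈ evenPowerSumIdeal (Fin n) ℂ by
    simpa only [LinearMap.sum_apply, AlgHom.toLinearMap_apply] using h
  rw [f.as_sum, map_sum]
  refine sum_mem fun s hs => ?_
  rw [monomial_eq_smul_prod_pairMonomial, map_smul]
  simp only [LinearMap.sum_apply, AlgHom.toLinearMap_apply]
  refine Submodule.smul_of_tower_mem _ _
    (sum_bAct_prod_pairMonomial_mem_evenPowerSumIdeal fun h => ?_)
  have hs0 : s = 0 := Finsupp.ext <| Sum.rec (fun i => congrArg Prod.fst (congrFun h i))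
    fun i => congrArg Prod.snd (congrFun h i)
  exact mem_support_iff.1 hs (hs0 ▸ hf)

lemma diagIdeal_le_evenPowerSumIdeal (n : ℕ) : diagIdeal n ≤ evenPowerSumIdeal (Fin n) ℂ := by
  refine Ideal.span_le.2 fun f hf => ?_
  have hsum := sum_bAct_mem_evenPowerSumIdeal hf.2
  simp only [hf.1, Finset.sum_const, smul_smul, ← Nat.cast_smul_eq_nsmul ℂ] at hsum
  exact (Submodule.smul_mem_iff ((evenPowerSumIdeal (Fin n) ℂ).restrictScalars ℂ) (by simp)).1 hsum

lemma bAct_injectionSum_of_odd (ε : Fin n → ℤˣ) (σ : Equiv.Perm (Fin n)) {m : Fin n → ℕ × ℕ}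
    (hm : ∀ i, Odd ((m i).1 + (m i).2)) :
    bAct n ε σ (injectionSum m) = (((∏ i, ε i : ℤˣ) : ℤ) : ℂ) • injectionSum m := by
  have hsign (τ : Equiv.Perm (Fin n)) : ∏ i, ((ε (τ i) : ℤ) : ℂ) ^ ((m i).1 + (m i).2) =
      (((∏ i, ε i : ℤˣ) : ℤ) : ℂ) := by
    rw [← Equiv.prod_comp τ ε, Units.coe_prod, Int.cast_prod]
    refine Finset.prod_congr rfl fun i _ => ?_
    rw [← Int.cast_pow, ← Units.val_pow_eq_pow_val, Int.units_pow_eq_pow_mod_two,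
      Nat.odd_iff.1 (hm i), pow_one]
  simp only [injectionSum_eq_sum_perm, map_sum, bAct_prod_pairMonomial, hsign, ← Finset.smul_sum]
  exact congrArg _ (Equiv.sum_comp (Equiv.mulLeft σ) fun τ => ∏ i, pairMonomial (τ i) (m i))

lemma mk_injectionSum_mem_chiIsotypic {m : Fin n → ℕ × ℕ}
    (hm : ∀ i, Odd ((m i).1 + (m i).2)) :
    Ideal.Quotient.mk (diagIdeal n) (injectionSum m) ∈ chiIsotypic n := by
  refine Submodule.mem_map_of_mem (f := (Ideal.Quotient.mkₐ ℂ (diagIdeal n)).toLinearMap) ?_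
  simp only [Submodule.mem_iInf]
  intro ε σ
  simp [bAct_injectionSum_of_odd ε σ hm]

lemma polarPairing_injectionSum {ι R : Type*} [CommRing R] [Fintype ι] (m : ι → ℕ × ℕ)
    (P : MvPolynomial (ℕ × ℕ) R) :
    polarPairing (injectionSum m : MvPolynomial (ι ⊕ ι) R) P =
      (Fintype.card ι).factorial * constantCoeff (iteratedPDeriv (Finset.univ.val.map m) P) := by
  classical
  have hterm (σ : Equiv.Perm ι) : polarPairing (∏ i, pairMonomial (σ i) (m i)) P =
      constantCoeff (iteratedPDeriv (Finset.univ.val.map m) P) := by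
    rw [← Equiv.prod_comp σ.symm]
    simp only [Equiv.apply_symm_apply]
    rw [polarPairing_prod_pairMonomial fun i => m (σ.symm i), ← Function.comp_def m,
      ← Multiset.map_map, Multiset.map_univ_val_equiv]
  rw [injectionSum_eq_sum_perm, map_sum, LinearMap.sum_apply, Finset.sum_congr rfl
    fun σ _ => hterm σ, Finset.sum_const, Finset.card_univ, Fintype.card_perm, nsmul_eq_mul]

end SignedPermutations

section FiniteQuotient

variable {n : ℕ}

lemma mk_eq_algebraMap_constantCoeff {f : MvPolynomial (Fin n ⊕ Fin n) ℂ}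
    (hf : ∀ ε σ, bAct n ε σ f = f) :
    Ideal.Quotient.mk (diagIdeal n) f = algebraMap ℂ _ (constantCoeff f) := by
  have hmem : f - C (constantCoeff f) ∈ diagIdeal n := by
    refine Ideal.subset_span ⟨fun ε σ => ?_, by simp⟩
    rw [map_sub, hf, ← algebraMap_eq, AlgHom.commutes]
  exact Ideal.Quotient.eq.2 hmem

lemma bAct_X_sq (ε : Fin n → ℤˣ) (σ : Equiv.Perm (Fin n)) (v : Fin n ⊕ Fin n) :
    bAct n ε σ (X v ^ 2) = X (σ.sumCongr σ v) ^ 2 := by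
  have hsq (i : Fin n) : ((ε i : ℤ) : ℂ) ^ 2 = 1 := by
    rw [← Int.cast_pow, ← Units.val_pow_eq_pow_val, Int.units_sq, Units.val_one, Int.cast_one]
  cases v <;> simp [bAct, smul_pow, hsq]

/-- The monic polynomial with roots the squares of all the variables `xᵢ` and `yᵢ`. -/
noncomputable def squaresPolynomial (n : ℕ) : Polynomial (MvPolynomial (Fin n ⊕ Fin n) ℂ) :=
  ∏ v, (Polynomial.X - Polynomial.C (X v ^ 2))

lemma map_bAct_squaresPolynomial (ε : Fin n → ℤˣ) (σ : Equiv.Perm (Fin n)) :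
    (squaresPolynomial n).map (bAct n ε σ : _ →+* _) = squaresPolynomial n := by
  simp only [squaresPolynomial, Polynomial.map_prod, Polynomial.map_sub, Polynomial.map_X,
    Polynomial.map_C, RingHom.coe_coe, bAct_X_sq]
  exact Equiv.prod_comp (σ.sumCongr σ) fun v => Polynomial.X - Polynomial.C (X v ^ 2)

lemma isIntegral_mk_X (v : Fin n ⊕ Fin n) :
    IsIntegral ℂ (Ideal.Quotient.mk (diagIdeal n) (X v)) := by
  have hmap : (squaresPolynomial n).map (Ideal.Quotient.mk (diagIdeal n)) =
      ((squaresPolynomial n).map constantCoeff).map (algebraMap ℂ _) := by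
    ext k
    simp only [Polynomial.coeff_map]
    refine mk_eq_algebraMap_constantCoeff fun ε σ => ?_
    conv_rhs => rw [← map_bAct_squaresPolynomial ε σ, Polynomial.coeff_map]
    rfl
  refine IsIntegral.of_pow two_pos ⟨(squaresPolynomial n).map constantCoeff,
    (Polynomial.monic_prod_X_sub_C _ _).map _, ?_⟩
  rw [← Polynomial.eval_map, ← hmap, ← map_pow, Polynomial.eval_map_apply, squaresPolynomial,
    Polynomial.eval_prod, Finset.prod_eq_zero (Finset.mem_univ v) (by simp), map_zero]

instance : Module.Finite ℂ (MvPolynomial (Fin n ⊕ Fin n) ℂ ⧸ diagIdeal n) := by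
  have hintegral : Algebra.IsIntegral ℂ (MvPolynomial (Fin n ⊕ Fin n) ℂ ⧸ diagIdeal n) := by
    refine ⟨fun x => ?_⟩
    obtain ⟨f, rfl⟩ := Ideal.Quotient.mk_surjective x
    induction f using MvPolynomial.induction_on with
    | C c => exact isIntegral_algebraMap
    | add f g hf hg => exact map_add (Ideal.Quotient.mk (diagIdeal n)) f g ▸ hf.add hg
    | mul_X f v hf =>
      exact map_mul (Ideal.Quotient.mk (diagIdeal n)) f (X v) ▸ hf.mul (isIntegral_mk_X v)
  exact Algebra.IsIntegral.finite

end FiniteQuotient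

section IsotypicPairing

/-- The pairing of the diagonal coinvariant ring with the odd invariants induced by
`polarPairing`. -/
noncomputable def coinvariantPairing (n : ℕ) : Subalgebra.toSubmodule (oddInvariants ℂ) →ₗ[ℂ]
    Module.Dual ℂ (MvPolynomial (Fin n ⊕ Fin n) ℂ ⧸ diagIdeal n) where
  toFun P := ((diagIdeal n).restrictScalars ℂ).liftQ (polarPairing.flip P)
      (fun _ hf => polarPairing_eq_zero_of_mem_evenPowerSumIdeal
        (diagIdeal_le_evenPowerSumIdeal n hf) P.2) ∘ₗ
    (Submodule.Quotient.restrictScalarsEquiv ℂ (diagIdeal n)).symm.toLinearMap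
  map_add' P Q := LinearMap.ext fun x => by
    obtain ⟨f, rfl⟩ := Ideal.Quotient.mk_surjective x
    exact map_add (polarPairing f) P.1 Q.1
  map_smul' c P := LinearMap.ext fun x => by
    obtain ⟨f, rfl⟩ := Ideal.Quotient.mk_surjective x
    exact map_smul (polarPairing f) c P.1

/-- The pairing of the χ′-isotypic component with the odd invariants of degree `n`. -/
noncomputable def isotypicPairing (n : ℕ) :
    (Subalgebra.toSubmodule (oddInvariants ℂ) ⊓ homogeneousSubmodule (ℕ × ℕ) ℂ n :
      Submodule ℂ (MvPolynomial (ℕ × ℕ) ℂ)) →ₗ[ℂ] Module.Dual ℂ (chiIsotypic n) :=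
  (chiIsotypic n).subtype.dualMap ∘ₗ coinvariantPairing n ∘ₗ Submodule.inclusion inf_le_left

lemma isotypicPairing_injective (n : ℕ) : Function.Injective (isotypicPairing n) := by
  refine (injective_iff_map_eq_zero _).2 fun P hP => Subtype.ext ?_
  refine eq_zero_of_constantCoeff_iteratedPDeriv_eq_zero P.2.2 P.2.1.1 fun s hs hodd => ?_
  obtain ⟨m, rfl⟩ : ∃ m : Fin n → ℕ × ℕ, Finset.univ.val.map m = s := by
    induction s using Quotient.inductionOn with | h l =>
    obtain rfl : l.length = n := hs
    exact ⟨l.get, by rw [Fin.univ_val_map, List.ofFn_get]; rfl⟩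
  have hm (i : Fin n) : Odd ((m i).1 + (m i).2) :=
    hodd _ (Multiset.mem_map_of_mem m (Finset.mem_univ i))
  have hpairing : polarPairing (injectionSum m) P.1 = 0 :=
    LinearMap.congr_fun hP ⟨_, mk_injectionSum_mem_chiIsotypic hm⟩
  rw [polarPairing_injectionSum] at hpairing
  exact (mul_eq_zero.1 hpairing).resolve_left (Nat.cast_ne_zero.2 (Nat.factorial_ne_zero _))

lemma card_le_finrank_chiIsotypic_of_linearIndependent {n : ℕ} {J : Type*} [Fintype J]
    {P : J → MvPolynomial (ℕ × ℕ) ℂ} (hli : LinearIndependent ℂ P)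
    (hinv : ∀ j, P j ∈ oddInvariants ℂ) (hhom : ∀ j, (P j).IsHomogeneous n) :
    Fintype.card J ≤ Module.finrank ℂ (chiIsotypic n) := by
  let Q (j : J) : (Subalgebra.toSubmodule (oddInvariants ℂ) ⊓ homogeneousSubmodule (ℕ × ℕ) ℂ n :
      Submodule ℂ (MvPolynomial (ℕ × ℕ) ℂ)) := ⟨P j, hinv j, hhom j⟩
  have hQ : LinearIndependent ℂ Q := LinearIndependent.of_comp (Submodule.subtype _) hli
  rw [← Subspace.dual_finrank_eq]
  exact (hQ.map' _ (LinearMap.ker_eq_bot.2 (isotypicPairing_injective n))).fintype_card_le_finrank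

end IsotypicPairing

section ProductFamilies

lemma linearIndependent_sumElim_of_comp {K V V' ι κ : Type*} [Ring K] [AddCommGroup V]
    [AddCommGroup V'] [Module K V] [Module K V'] {v : ι → V} {w : κ → V} (D : V →ₗ[K] V')
    (hv : LinearIndependent K v) (hD : ∀ i, D (v i) = 0) (hw : LinearIndependent K (D ∘ w)) :
    LinearIndependent K (Sum.elim v w) := by
  refine hv.sum_type (hw.of_comp D) ((Submodule.range_ker_disjoint hw).symm.mono_left ?_)
  rw [Submodule.span_le]
  rintro _ ⟨i, rfl⟩
  exact hD i

variable {R : Type*} [CommRing R]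

/-- The invariants `z₁₀^a z₀₁^b F₃^k` with `(a, b, k) = e`, where `F₃` is the cubic form at the
root. -/
noncomputable def cubicProduct (e : ℕ × ℕ × ℕ) : MvPolynomial (ℕ × ℕ) R :=
  X (1, 0) ^ e.1 * X (0, 1) ^ e.2.1 * formAtRoot 3 ^ e.2.2

/-- Products of `quinticInvariant (1, 0)` and `-quinticInvariant (0, 1)` with invariants of the form
`cubicProduct e`, indexed so that `∂_{z₅₀}` maps them to distinct `cubicProduct`s. -/
noncomputable def quinticProduct : ℕ × ℕ × ℕ → MvPolynomial (ℕ × ℕ) R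
  | (0, b, k) => cubicProduct (0, b, k) * quinticInvariant (1, 0)
  | (a + 1, b, k) => cubicProduct (a, b, k) * -quinticInvariant (0, 1)

lemma cubicProduct_mem_oddInvariants (e : ℕ × ℕ × ℕ) : cubicProduct e ∈ oddInvariants R :=
  mul_mem (mul_mem (pow_mem (X_mem_oddInvariants rfl) _) (pow_mem (X_mem_oddInvariants rfl) _))
    (pow_mem cubicForm_mem_oddInvariants _)

lemma quinticProduct_mem_oddInvariants : ∀ e : ℕ × ℕ × ℕ, quinticProduct e ∈ oddInvariants R
  | (0, _, _) => mul_mem (cubicProduct_mem_oddInvariants _) (quinticInvariant_mem_oddInvariants rfl)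
  | (_ + 1, _, _) => mul_mem (cubicProduct_mem_oddInvariants _)
      (neg_mem (quinticInvariant_mem_oddInvariants rfl))

lemma isHomogeneous_cubicProduct (e : ℕ × ℕ × ℕ) :
    (cubicProduct e : MvPolynomial (ℕ × ℕ) R).IsHomogeneous (e.1 + e.2.1 + 4 * e.2.2) := by
  simpa only [cubicProduct, one_mul] using (((isHomogeneous_X R ((1 : ℕ), 0)).pow e.1).mul
    ((isHomogeneous_X R ((0 : ℕ), 1)).pow e.2.1)).mul ((isHomogeneous_formAtRoot 3).pow e.2.2)

lemma isHomogeneous_quinticProduct : ∀ e : ℕ × ℕ × ℕ,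
    (quinticProduct e : MvPolynomial (ℕ × ℕ) R).IsHomogeneous (e.1 - 1 + e.2.1 + 4 * e.2.2 + 7)
  | (0, _, _) => (isHomogeneous_cubicProduct _).mul (isHomogeneous_quinticInvariant rfl)
  | (_ + 1, _, _) => (isHomogeneous_cubicProduct _).mul (isHomogeneous_quinticInvariant rfl).neg

lemma linearIndependent_cubicProduct :
    LinearIndependent R (cubicProduct : ℕ × ℕ × ℕ → MvPolynomial (ℕ × ℕ) R) := by
  let exponent (e : ℕ × ℕ × ℕ) : Fin 3 →₀ ℕ :=
    Finsupp.single 0 e.1 + Finsupp.single 1 (e.2.1 + 3 * e.2.2) + Finsupp.single 2 e.2.2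
  have hexponent : Function.Injective exponent := by
    rintro ⟨a, b, k⟩ ⟨a', b', k'⟩ h
    have ha : a = a' := by simpa [exponent] using DFunLike.congr_fun h 0
    have hb : b + 3 * k = b' + 3 * k' := by simpa [exponent] using DFunLike.congr_fun h 1
    have hk : k = k' := by simpa [exponent] using DFunLike.congr_fun h 2
    rw [ha, hk, show b = b' by lia]
  let specialize : MvPolynomial (ℕ × ℕ) R →ₐ[R] MvPolynomial (Fin 3) R := aeval fun m =>
    if m = (1, 0) then X 0 else if m = (0, 1) then X 1 else if m = (3, 0) then X 2 else 0
  have hX10 : specialize (X (1, 0)) = X 0 := by simp [specialize]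
  have hX01 : specialize (X (0, 1)) = X 1 := by simp [specialize]
  have hcubic : specialize (formAtRoot 3) = X 2 * X 1 ^ 3 := by
    simp [specialize, formAtRoot, rootMonomial, Finset.Nat.antidiagonal_succ]
  have hmonomial : specialize ∘ cubicProduct = basisMonomials (Fin 3) R ∘ exponent := by
    funext e
    have hexpand : (monomial (exponent e) 1 : MvPolynomial (Fin 3) R) =
        X 0 ^ e.1 * X 1 ^ (e.2.1 + 3 * e.2.2) * X 2 ^ e.2.2 := by
      simp only [X_pow_eq_monomial, monomial_mul, mul_one, exponent]
    simp only [Function.comp_apply, coe_basisMonomials, hexpand, cubicProduct, map_mul, map_pow,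
      hX10, hX01, hcubic]
    ring
  refine LinearIndependent.of_comp specialize.toLinearMap ?_
  rw [AlgHom.coe_toLinearMap, hmonomial]
  exact (basisMonomials (Fin 3) R).linearIndependent.comp exponent hexponent

lemma pderiv_cubicProduct (e : ℕ × ℕ × ℕ) :
    pderiv (5, 0) (cubicProduct e : MvPolynomial (ℕ × ℕ) R) = 0 := by
  simp [cubicProduct, pderiv_formAtRoot]

lemma pderiv_quinticInvariant (m : ℕ × ℕ) :
    pderiv (5, 0) (quinticInvariant m : MvPolynomial (ℕ × ℕ) R) = rootMonomial (m + (5, 0)) := by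
  simp [quinticInvariant, pderiv_comm (5, 0) m, pderiv_formAtRoot, pderiv_rootMonomial,
    rootMonomial_add]

lemma linearIndependent_pderiv_quinticProduct :
    LinearIndependent R fun e => pderiv (5, 0) (quinticProduct e : MvPolynomial (ℕ × ℕ) R) := by
  let shift : ℕ × ℕ × ℕ → ℕ × ℕ × ℕ
    | (0, b, k) => (0, b + 6, k)
    | (a + 1, b, k) => (a + 1, b + 5, k)
  have hshift : Function.Injective shift := by
    rintro ⟨_ | a, b, k⟩ ⟨_ | a', b', k'⟩ h <;> simp_all [shift]
  convert linearIndependent_cubicProduct.comp shift hshift using 1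
  funext ⟨a, b, k⟩
  cases a <;>
  · simp only [quinticProduct, Derivation.leibniz, map_neg, pderiv_quinticInvariant,
      pderiv_cubicProduct, smul_eq_mul, mul_zero, add_zero, Function.comp_apply, shift]
    simp only [cubicProduct, rootMonomial, Prod.fst_add, Prod.snd_add]
    ring

lemma linearIndependent_cubicProduct_quinticProduct :
    LinearIndependent R (Sum.elim cubicProduct quinticProduct :
      (ℕ × ℕ × ℕ) ⊕ (ℕ × ℕ × ℕ) → MvPolynomial (ℕ × ℕ) R) :=
  linearIndependent_sumElim_of_comp (pderiv (5, 0)).toLinearMap linearIndependent_cubicProduct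
    pderiv_cubicProduct linearIndependent_pderiv_quinticProduct

end ProductFamilies

section DimensionBound

open Finset (range)

/-- The pairs `⟨k, s⟩` indexing the `cubicProduct`s `z₁₀^s z₀₁^(n - 4k - s) F₃^k` of degree `n`. -/
def cubicIndices (n : ℕ) : Finset (Σ _ : ℕ, ℕ) :=
  (range (n / 4 + 1)).sigma fun k => range (n - 4 * k + 1)

/-- The pairs `⟨k, s⟩` indexing the `quinticProduct`s of degree `n` with `k` factors `F₃` and first
exponent `s`. -/
def quinticIndices (n : ℕ) : Finset (Σ _ : ℕ, ℕ) :=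
  (range ((n - 3) / 4)).sigma fun k => range (n - 4 * k - 5)

lemma card_cubicIndices_add_four (n : ℕ) :
    (cubicIndices (n + 4)).card = (cubicIndices n).card + (n + 5) := by
  simp [cubicIndices, Finset.sum_range_succ' _ (n / 4 + 1), Nat.mul_add, Nat.add_sub_add_right]

lemma card_quinticIndices_add_four {n : ℕ} (hn : 3 ≤ n) :
    (quinticIndices (n + 4)).card = (quinticIndices n).card + (n - 1) := by
  have h : (n + 4 - 3) / 4 = (n - 3) / 4 + 1 := by lia
  rw [quinticIndices, h]
  simp [quinticIndices, Finset.sum_range_succ' _ ((n - 3) / 4), Nat.mul_add, Nat.add_sub_add_right]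

lemma le_card_cubicIndices_add_card_quinticIndices (n : ℕ) :
    ((n : ℤ) + 1) + ((n : ℤ) - 1) * ((n : ℤ) - 3) / 4 ≤
      ((cubicIndices n).card + (quinticIndices n).card : ℕ) := by
  induction n using Nat.strong_induction_on with
  | h n ih =>
    obtain hn | hn := lt_or_ge n 7
    · interval_cases n <;> decide
    · obtain ⟨m, rfl⟩ := Nat.exists_eq_add_of_le' (show 4 ≤ n by lia)
      have hquotient : (((m + 4 : ℕ) : ℤ) - 1) * (((m + 4 : ℕ) : ℤ) - 3) / 4 =
          ((m : ℤ) - 1) * ((m : ℤ) - 3) / 4 + 2 * m := by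
        rw [← Int.add_mul_ediv_left _ _ four_ne_zero]
        push_cast
        ring_nf
      have hm := ih m (by lia)
      rw [hquotient, card_cubicIndices_add_four, card_quinticIndices_add_four (by lia)]
      lia

lemma degree_eq_of_mem_cubicIndices {n : ℕ} {p : Σ _ : ℕ, ℕ} (hp : p ∈ cubicIndices n) :
    p.2 + (n - 4 * p.1 - p.2) + 4 * p.1 = n := by
  simp only [cubicIndices, Finset.mem_sigma, Finset.mem_range] at hp
  lia

lemma degree_eq_of_mem_quinticIndices {n : ℕ} {p : Σ _ : ℕ, ℕ} (hp : p ∈ quinticIndices n) :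
    p.2 - 1 + (n - 4 * p.1 - 7 - (p.2 - 1)) + 4 * p.1 + 7 = n := by
  simp only [quinticIndices, Finset.mem_sigma, Finset.mem_range] at hp
  lia

lemma card_cubicIndices_add_card_quinticIndices_le_finrank (n : ℕ) :
    (cubicIndices n).card + (quinticIndices n).card ≤ Module.finrank ℂ (chiIsotypic n) := by
  let cubicExponent (p : cubicIndices n) : ℕ × ℕ × ℕ := (p.1.2, n - 4 * p.1.1 - p.1.2, p.1.1)
  -- The exponents `0` and `1` of `z₁₀` leave the same degree for `z₀₁`, hence the truncated `- 1`.
  let quinticExponent (p : quinticIndices n) : ℕ × ℕ × ℕ :=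
    (p.1.2, n - 4 * p.1.1 - 7 - (p.1.2 - 1), p.1.1)
  have hcubic : Function.Injective cubicExponent := fun p q h => by
    simp only [cubicExponent, Prod.mk.injEq] at h
    exact Subtype.ext (Sigma.ext h.2.2 (heq_of_eq h.1))
  have hquintic : Function.Injective quinticExponent := fun p q h => by
    simp only [quinticExponent, Prod.mk.injEq] at h
    exact Subtype.ext (Sigma.ext h.2.2 (heq_of_eq h.1))
  have hli := (linearIndependent_cubicProduct_quinticProduct (R := ℂ)).comp
    (Sum.map cubicExponent quinticExponent) (hcubic.sumMap hquintic)
  rw [← Fintype.card_coe, ← Fintype.card_coe, ← Fintype.card_sum]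
  refine card_le_finrank_chiIsotypic_of_linearIndependent hli ?_ ?_
  · rintro (p | p)
    exacts [cubicProduct_mem_oddInvariants _, quinticProduct_mem_oddInvariants _]
  · rintro (p | p)
    · exact Eq.subst (motive := IsHomogeneous (cubicProduct (cubicExponent p)))
        (degree_eq_of_mem_cubicIndices p.2) (isHomogeneous_cubicProduct _)
    · exact Eq.subst (motive := IsHomogeneous (quinticProduct (quinticExponent p)))
        (degree_eq_of_mem_quinticIndices p.2) (isHomogeneous_quinticProduct _)

end DimensionBound

theorem dim_chi_isotypic_ge_of_odd_general (n : ℕ) :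
    ((n : ℤ) + 1) + ((n : ℤ) - 1) * ((n : ℤ) - 3) / 4 ≤
      (Module.finrank ℂ (chiIsotypic n) : ℤ) :=
  (le_card_cubicIndices_add_card_quinticIndices n).trans
    (Int.ofNat_le.2 (card_cubicIndices_add_card_quinticIndices_le_finrank n))

/-- If `n` is an odd positive integer, then the χ′-isotypic component of the diagonal
coinvariant ring of `W(Bₙ)` satisfies `dim_ℂ (R_W)^{χ'} ≥ (n+1) + (n-1)(n-3)/4`. -/
theorem dim_chi_isotypic_ge_of_odd (n : ℕ) (hn : 0 < n) (hodd : Odd n) :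
    ((n : ℤ) + 1) + ((n : ℤ) - 1) * ((n : ℤ) - 3) / 4 ≤
      (Module.finrank ℂ (chiIsotypic n) : ℤ) :=
  dim_chi_isotypic_ge_of_odd_general n
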